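/- Suppose the GI/G/1-type Markov chain is irreducible, aperiodic and positive recurrent, the phase matrix A is stochastic, and min(φ_{A+}, φ_{B+}) > 1. Fix any real z with 1 < z < min(φ_{A+}, φ_{B+}, η), and let Y = (y_1,…,y_m)^t be the Perron–Frobenius right eigenvector of A*(z) with all entries ≥ 1 corresponding to the eigenvalue χ(z). Then the function V(i,r) = z^i y_r (which satisfies V ≥ 1) verifies the geometric drift condition: there exist a nonempty finite set H ⊆ S and a constant λ < 1 such that Σ_{s∈S} P((i,r),s) V(s) ≤ λ V(i,r) for all states (i,r) ∉ H, and Σ_{s∈S} P((i,r),s) V(s) < ∞ for all (i,r) ∈ H. -/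

import Mathlib

open Filter Topology
open scoped ENNReal NNReal BigOperators

namespace GIG1

/-- The state space of a `GI/G/1`-type Markov chain: level `i : ℕ`, phase `j : Fin m`. -/
abbrev S (m : ℕ) := ℕ × Fin m

/-- The transition kernel of the `GI/G/1`-type Markov chain with matrix blocks `A, B`. -/
noncomputable def P {m : ℕ} (A B : ℤ → Matrix (Fin m) (Fin m) ℝ) : S m → S m → ℝ
  | (0, j), (k, s) => B (k : ℤ) j s
  | (i + 1, j), (0, s) => B (-(i + 1 : ℤ)) j s
  | (i + 1, j), (k + 1, s) => A ((k : ℤ) - (i : ℤ)) j s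

/-- `n`-step transition probabilities. -/
noncomputable def Pn {m : ℕ} (P : S m → S m → ℝ) : ℕ → S m → S m → ℝ
  | 0, x, y => if x = y then 1 else 0
  | n + 1, x, y => ∑' z : S m, P x z * Pn P n z y

def Stochastic {m : ℕ} (P : S m → S m → ℝ) : Prop :=
  (∀ x y, 0 ≤ P x y) ∧ ∀ x, HasSum (P x) 1

def ChainIrreducible {m : ℕ} (P : S m → S m → ℝ) : Prop :=
  ∀ x y, ∃ n, 1 ≤ n ∧ 0 < Pn P n x y

def ChainAperiodic {m : ℕ} (P : S m → S m → ℝ) : Prop :=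
  ∀ x, ∃ N, ∀ n ≥ N, 0 < Pn P n x x

/-- `pd` is a stationary probability distribution of `P`; for an irreducible aperiodic chain
this is equivalent to positive recurrence. -/
def IsStationary {m : ℕ} (P : S m → S m → ℝ) (pd : S m → ℝ) : Prop :=
  (∀ x, 0 ≤ pd x) ∧ HasSum pd 1 ∧ ∀ y, HasSum (fun x => pd x * P x y) (pd y)

/-- The phase matrix `A = ∑ₖ Aₖ`. -/
noncomputable def matA {m : ℕ} (A : ℤ → Matrix (Fin m) (Fin m) ℝ) : Matrix (Fin m) (Fin m) ℝ :=
  Matrix.of fun r s => ∑' k : ℤ, A k r s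

/-- The phase matrix `A = ∑ₖ Aₖ` is stochastic. -/
def PhaseStochastic {m : ℕ} (A : ℤ → Matrix (Fin m) (Fin m) ℝ) : Prop :=
  ∀ r, HasSum (fun p : ℤ × Fin m => A p.1 r p.2) 1

/-- Irreducibility of a nonnegative matrix. -/
def MatIrreducible {m : ℕ} (M : Matrix (Fin m) (Fin m) ℝ) : Prop :=
  ∀ r s, ∃ n, 1 ≤ n ∧ 0 < (M ^ n) r s

/-- Radius of convergence of a power series with nonnegative coefficients. -/
noncomputable def radius (c : ℕ → ℝ) : ℝ≥0∞ :=
  ⨆ (r : ℝ≥0) (_ : Summable fun k => c k * (r : ℝ) ^ k), (r : ℝ≥0∞)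

/-- `φ_{A+}`: the minimum over entries of the radii of convergence of `∑_{k ≥ 1} A_k(r,s) z^k`. -/
noncomputable def phiA {m : ℕ} (A : ℤ → Matrix (Fin m) (Fin m) ℝ) : ℝ≥0∞ :=
  ⨅ (r : Fin m) (s : Fin m), radius fun k => A ((k : ℤ) + 1) r s

/-- `φ_{B+}`. -/
noncomputable def phiB {m : ℕ} (B : ℤ → Matrix (Fin m) (Fin m) ℝ) : ℝ≥0∞ :=
  ⨅ (r : Fin m) (s : Fin m), radius fun k => B ((k : ℤ) + 1) r s

/-- The matrix sequence `{C_k}_{k ≥ 1}` is light-tailed. -/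
def LightMat {m : ℕ} (C : ℤ → Matrix (Fin m) (Fin m) ℝ) : Prop :=
  ∀ r s, ∃ ε > (0 : ℝ),
    Summable fun k : ℕ => C ((k : ℤ) + 1) r s * Real.exp (ε * ((k : ℝ) + 1))

/-- `A^*(z) = ∑_{k ∈ ℤ} z^k A_k` for complex `z`. -/
noncomputable def AstarC {m : ℕ} (A : ℤ → Matrix (Fin m) (Fin m) ℝ) (z : ℂ) :
    Matrix (Fin m) (Fin m) ℂ :=
  Matrix.of fun r s => ∑' k : ℤ, (A k r s : ℂ) * z ^ k

/-- `A^*(z) = ∑_{k ∈ ℤ} z^k A_k` for real `z`. -/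
noncomputable def AstarR {m : ℕ} (A : ℤ → Matrix (Fin m) (Fin m) ℝ) (z : ℝ) :
    Matrix (Fin m) (Fin m) ℝ :=
  Matrix.of fun r s => ∑' k : ℤ, A k r s * z ^ k

/-- The set `Ω = {z ∈ ℂ : 1 < |z| < φ_{A+}, det(I - A^*(z)) = 0}`. -/
def Omega {m : ℕ} (A : ℤ → Matrix (Fin m) (Fin m) ℝ) : Set ℂ :=
  {z | 1 < ‖z‖ ∧ ENNReal.ofReal ‖z‖ < phiA A ∧ (1 - AstarC A z).det = 0}

/-- `η`: the minimal modulus of an element of `Ω`, or `∞` when `Ω = ∅`. -/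
noncomputable def eta {m : ℕ} (A : ℤ → Matrix (Fin m) (Fin m) ℝ) : ℝ≥0∞ :=
  sInf ((fun z : ℂ => ENNReal.ofReal ‖z‖) '' Omega A)

/-- The largest (Perron–Frobenius) eigenvalue of a nonnegative matrix. -/
noncomputable def chi {m : ℕ} (M : Matrix (Fin m) (Fin m) ℝ) : ℝ :=
  sSup {r : ℝ | ∃ v : Fin m → ℝ, v ≠ 0 ∧ M.mulVec v = r • v}

/-! ### Abstract chain lemmas -/

lemma hasSum_prod_fin {ι : Type*} {m : ℕ} {f : ι × Fin m → ℝ} {a : Fin m → ℝ}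
    (h : ∀ s, HasSum (fun k => f (k, s)) (a s)) : HasSum f (∑ s, a s) := by
  have h1 : ∀ s, HasSum (fun p : ι × Fin m => if p.2 = s then f p else 0) (a s) := by
    intro s
    have hi : Function.Injective (fun k : ι => (k, s)) := fun a b hab => by simpa using hab
    refine (hi.hasSum_iff ?_).1 ?_
    · rintro ⟨k, s'⟩ hx
      by_cases hs : s' = s
      · exact absurd ⟨k, by simp [hs]⟩ hx
      · simp [hs]
    · simpa [Function.comp_def] using h s
  have h2 := hasSum_sum (s := Finset.univ) (fun s _ => h1 s)
  simpa using h2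

lemma summable_prod_fin {ι : Type*} {m : ℕ} {f : ι × Fin m → ℝ}
    (h : ∀ s, Summable (fun k => f (k, s))) : Summable f :=
  (hasSum_prod_fin (fun s => (h s).hasSum)).summable

lemma closed_of_Pn {m : ℕ} {Q : S m → S m → ℝ} (hQ : ∀ x y, 0 ≤ Q x y) (C : Set (S m))
    (hC : ∀ x y, x ∈ C → 0 < Q x y → y ∈ C) :
    ∀ n x y, x ∈ C → Pn Q n x y ≠ 0 → y ∈ C := by
  intro n
  induction n with
  | zero =>
    intro x y hx h
    by_cases hxy : x = y
    · exact hxy ▸ hx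
    · simp [Pn, hxy] at h
  | succ n ih =>
    intro x y hx h
    have : ∃ w, Q x w * Pn Q n w y ≠ 0 := by
      by_contra hcon
      push Not at hcon
      exact h (by simp [Pn, hcon])
    obtain ⟨w, hw⟩ := this
    have h1 : Q x w ≠ 0 := left_ne_zero_of_mul hw
    have h2 := right_ne_zero_of_mul hw
    exact ih w y (hC x w hx (lt_of_le_of_ne (hQ x w) (Ne.symm h1))) h2

lemma closed_univ {m : ℕ} {Q : S m → S m → ℝ} (hQ : ∀ x y, 0 ≤ Q x y)
    (hirr : ChainIrreducible Q) (C : Set (S m))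
    (hC : ∀ x y, x ∈ C → 0 < Q x y → y ∈ C) (x : S m) (hx : x ∈ C) (y : S m) : y ∈ C := by
  obtain ⟨n, _, hn⟩ := hirr x y
  exact closed_of_Pn hQ C hC n x y hx hn.ne'

lemma pd_pos {m : ℕ} {Q : S m → S m → ℝ} (hQ : Stochastic Q) (hirr : ChainIrreducible Q)
    {pd : S m → ℝ} (hpd : IsStationary Q pd) (y : S m) : 0 < pd y := by
  obtain ⟨h0, h1, h2⟩ := hpd
  have : ∃ x, pd x ≠ 0 := by
    by_contra hcon
    push Not at hcon
    have : pd = fun _ => 0 := funext hcon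
    rw [this] at h1
    exact zero_ne_one (hasSum_zero.unique h1)
  obtain ⟨x, hx⟩ := this
  refine closed_univ hQ.1 hirr {x | 0 < pd x} ?_ x (lt_of_le_of_ne (h0 x) hx.symm) y
  intro x y hx hxy
  have := le_hasSum (h2 y) x (fun j _ => mul_nonneg (h0 j) (hQ.1 j y))
  exact lt_of_lt_of_le (mul_pos hx hxy) this

lemma stationary_bounded {m : ℕ} {Q : S m → S m → ℝ} (hQ : Stochastic Q)
    {pd : S m → ℝ} (hpd : IsStationary Q pd) (F : S m → ℝ) (M : ℝ)
    (hF : ∀ x, |F x| ≤ M) :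
    HasSum (fun x => pd x * ∑' y, Q x y * F y) (∑' y, pd y * F y) := by
  obtain ⟨h0, h1, h2⟩ := hpd
  have hs : Summable (Function.uncurry (fun x y => pd x * Q x y * F y)) := by
    have hb : Summable (fun p : S m × S m => pd p.1 * Q p.1 p.2 * M) := by
      apply Summable.mul_right
      refine (summable_prod_of_nonneg (fun p => mul_nonneg (h0 _) (hQ.1 _ _))).2 ⟨?_, ?_⟩
      · intro x
        have := (hQ.2 x).summable.mul_left (pd x)
        exact this
      · simp only [tsum_mul_left, (hQ.2 _).tsum_eq, mul_one]
        exact h1.summable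
    refine Summable.of_norm_bounded hb ?_
    rintro ⟨x, y⟩
    simp only [Function.uncurry, Real.norm_eq_abs, abs_mul, abs_of_nonneg (h0 x),
      abs_of_nonneg (hQ.1 x y)]
    exact mul_le_mul_of_nonneg_left (hF y) (mul_nonneg (h0 _) (hQ.1 _ _))
  have e := hs.tsum_comm
  have e1 : ∀ y, ∑' x, pd x * Q x y * F y = pd y * F y := by
    intro y; rw [tsum_mul_right, (h2 y).tsum_eq]
  have e2 : ∀ x, ∑' y, pd x * Q x y * F y = pd x * ∑' y, Q x y * F y := by
    intro x; rw [← tsum_mul_left]; simp only [mul_assoc]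
  simp only [e1, e2] at e
  rw [e]
  have := hs.prod
  simp only [Function.uncurry, e2] at this
  exact this.hasSum

lemma subharmonic_const {m : ℕ} {Q : S m → S m → ℝ} (hQ : Stochastic Q)
    (hirr : ChainIrreducible Q) {pd : S m → ℝ} (hpd : IsStationary Q pd)
    (G : S m → ℝ) (hG0 : ∀ x, 0 ≤ G x) (hGs : ∀ x, Summable (fun y => Q x y * G y))
    (hsub : ∀ x, G x ≤ ∑' y, Q x y * G y) (K : ℝ)
    (hK : ∀ x, ∑' y, Q x y * max (G y - G x) 0 ≤ K)
    (x0 : S m) (hx0 : G x0 = 0) (x : S m) : G x = 0 := by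
  have hQs : ∀ x c, HasSum (fun y => Q x y * c) c := fun x c => by
    simpa using (hQ.2 x).mul_right c
  have hd : ∀ x, HasSum (fun y => Q x y * (G y - G x)) (∑' y, Q x y * G y - G x) := by
    intro x
    have := (hGs x).hasSum.sub (hQs x (G x))
    simpa only [mul_sub] using this
  have hpos : ∀ x, Summable (fun y => Q x y * max (G y - G x) 0) := by
    intro x
    refine Summable.of_nonneg_of_le (fun y => mul_nonneg (hQ.1 _ _) (le_max_right _ _)) ?_ (hGs x)
    intro y
    refine mul_le_mul_of_nonneg_left ?_ (hQ.1 _ _)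
    exact max_le (by linarith [hG0 x]) (hG0 y)
  have habs : ∀ x, HasSum (fun y => Q x y * |G y - G x|)
      (2 * ∑' y, Q x y * max (G y - G x) 0 - (∑' y, Q x y * G y - G x)) := by
    intro x
    have := ((hpos x).hasSum.mul_left 2).sub (hd x)
    refine this.congr_fun ?_ |> fun h => h
    intro y
    rcases le_total 0 (G y - G x) with h | h
    · rw [abs_of_nonneg h, max_eq_left h]; ring
    · rw [abs_of_nonpos h, max_eq_right h]; ring
  have hlip : ∀ (M : ℕ) x y, |min (G y) M - min (G x) M| ≤ |G y - G x| := by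
    intro M x y
    have := abs_min_sub_min_le_max (G y) (M : ℝ) (G x) M
    simpa using this
  have hFM : ∀ (M : ℕ) x, HasSum (fun y => Q x y * (min (G y) M - min (G x) M))
      (∑' y, Q x y * min (G y) M - min (G x) M) := by
    intro M x
    have h1 : Summable (fun y => Q x y * min (G y) (M:ℝ)) := by
      refine Summable.of_nonneg_of_le (fun y => mul_nonneg (hQ.1 _ _)
        (le_min (hG0 y) (Nat.cast_nonneg _))) ?_ (hGs x)
      intro y
      exact mul_le_mul_of_nonneg_left (min_le_left _ _) (hQ.1 _ _)
    have := h1.hasSum.sub (hQs x (min (G x) M))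
    simpa only [mul_sub] using this
  have hmin : ∀ a : ℝ, Tendsto (fun M : ℕ => min a (M:ℝ)) atTop (𝓝 a) := by
    intro a
    obtain ⟨N, hN⟩ := exists_nat_ge a
    refine tendsto_const_nhds.congr' ?_
    filter_upwards [eventually_ge_atTop N] with M hM
    have : (N:ℝ) ≤ M := by exact_mod_cast hM
    rw [min_eq_left (hN.trans this)]
  have hin : ∀ x, Tendsto (fun M : ℕ => ∑' y, Q x y * (min (G y) M - min (G x) M)) atTop
      (𝓝 (∑' y, Q x y * (G y - G x))) := by
    intro x
    refine tendsto_tsum_of_dominated_convergence (habs x).summable ?_ ?_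
    · intro y
      exact ((hmin (G y)).sub (hmin (G x))).const_mul _
    · refine Eventually.of_forall fun M y => ?_
      rw [Real.norm_eq_abs, abs_mul, abs_of_nonneg (hQ.1 x y)]
      exact mul_le_mul_of_nonneg_left (hlip M x y) (hQ.1 _ _)
  have hout : Tendsto (fun M : ℕ => ∑' x, pd x * ∑' y, Q x y * (min (G y) M - min (G x) M)) atTop
      (𝓝 (∑' x, pd x * ∑' y, Q x y * (G y - G x))) := by
    refine tendsto_tsum_of_dominated_convergence (bound := fun x => pd x * (2 * K))
      (hpd.2.1.summable.mul_right _) (fun x => (hin x).const_mul _) ?_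
    refine Eventually.of_forall fun M x => ?_
    rw [Real.norm_eq_abs, abs_mul, abs_of_nonneg (hpd.1 x)]
    refine mul_le_mul_of_nonneg_left ?_ (hpd.1 x)
    have h1 : |∑' y, Q x y * (min (G y) M - min (G x) M)| ≤ ∑' y, Q x y * |G y - G x| := by
      have := tsum_of_norm_bounded (habs x).summable.hasSum
        (f := fun y => Q x y * (min (G y) (M:ℝ) - min (G x) M)) (fun y => by
          rw [Real.norm_eq_abs, abs_mul, abs_of_nonneg (hQ.1 x y)]
          exact mul_le_mul_of_nonneg_left (hlip M x y) (hQ.1 _ _))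
      simpa using this
    rw [(habs x).tsum_eq] at h1
    linarith [hsub x, hK x]
  have hzero : ∀ M : ℕ, ∑' x, pd x * ∑' y, Q x y * (min (G y) M - min (G x) M) = 0 := by
    intro M
    have hb : ∀ x, |min (G x) (M:ℝ)| ≤ M := fun x => by
      rw [abs_of_nonneg (le_min (hG0 x) (Nat.cast_nonneg _))]; exact min_le_right _ _
    have h1 := stationary_bounded hQ hpd (fun x => min (G x) (M:ℝ)) M hb
    have h2 : Summable (fun x => pd x * min (G x) (M:ℝ)) := by
      refine Summable.of_norm_bounded (hpd.2.1.summable.mul_right (M:ℝ)) ?_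
      intro x
      rw [Real.norm_eq_abs, abs_mul, abs_of_nonneg (hpd.1 x)]
      exact mul_le_mul_of_nonneg_left (hb x) (hpd.1 x)
    have h3 := h1.sub h2.hasSum
    rw [sub_self] at h3
    rw [← h3.tsum_eq]
    refine tsum_congr fun x => ?_
    rw [(hFM M x).tsum_eq, mul_sub]
  simp only [hzero] at hout
  have hlim := tendsto_nhds_unique hout tendsto_const_nhds
  have hDnn : ∀ x, 0 ≤ ∑' y, Q x y * (G y - G x) := fun x => by
    rw [(hd x).tsum_eq]; linarith [hsub x]
  have hDK : ∀ x, ∑' y, Q x y * (G y - G x) ≤ K := fun x =>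
    ((hd x).summable.tsum_le_tsum (fun y => mul_le_mul_of_nonneg_left (le_max_left _ _) (hQ.1 x y))
      (hpos x)).trans (hK x)
  have hsm : Summable (fun x => pd x * ∑' y, Q x y * (G y - G x)) :=
    Summable.of_nonneg_of_le (fun x => mul_nonneg (hpd.1 x) (hDnn x))
      (fun x => mul_le_mul_of_nonneg_left (hDK x) (hpd.1 x)) (hpd.2.1.summable.mul_right K)
  have hD0 : ∀ x, ∑' y, Q x y * G y = G x := by
    intro x
    have h1 := (hasSum_zero_iff_of_nonneg (fun x => mul_nonneg (hpd.1 x) (hDnn x))).1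
      (hlim ▸ hsm.hasSum)
    have h2 := congrFun h1 x
    simp only [Pi.zero_apply, mul_eq_zero, (pd_pos hQ hirr hpd x).ne', false_or] at h2
    rw [(hd x).tsum_eq] at h2
    linarith
  refine closed_univ hQ.1 hirr {x | G x = 0} ?_ x0 hx0 x
  intro x y hx hxy
  have h1 := hD0 x
  rw [show G x = 0 from hx] at h1
  have h2 := (hasSum_zero_iff_of_nonneg (fun y => mul_nonneg (hQ.1 x y) (hG0 y))).1
    (h1 ▸ (hGs x).hasSum)
  have h3 := congrFun h2 y
  simp only [Pi.zero_apply, mul_eq_zero, hxy.ne', false_or] at h3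
  exact h3

/-! ### Finite matrix lemmas -/

lemma mulVec_mono' {m : ℕ} {M : Matrix (Fin m) (Fin m) ℝ} (hM : ∀ r s, 0 ≤ M r s)
    {u v : Fin m → ℝ} (h : ∀ s, u s ≤ v s) (r : Fin m) : M.mulVec u r ≤ M.mulVec v r := by
  simp only [Matrix.mulVec, dotProduct]
  exact Finset.sum_le_sum fun s _ => mul_le_mul_of_nonneg_left (h s) (hM r s)

lemma mulVec_const {m : ℕ} {M : Matrix (Fin m) (Fin m) ℝ} (hM1 : ∀ r, ∑ s, M r s = 1) (c : ℝ)
    (r : Fin m) : M.mulVec (fun _ => c) r = c := by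
  simp [Matrix.mulVec, dotProduct, ← Finset.sum_mul, hM1]

lemma max_principle {m : ℕ} (hm : 0 < m) {M : Matrix (Fin m) (Fin m) ℝ} (hM : ∀ r s, 0 ≤ M r s)
    (hM1 : ∀ r, ∑ s, M r s = 1) (h : Fin m → ℝ) (c : ℝ)
    (hc : ∀ r, h r + c ≤ M.mulVec h r) : c ≤ 0 := by
  have : Nonempty (Fin m) := ⟨⟨0, hm⟩⟩
  obtain ⟨r, hr⟩ := Finite.exists_max h
  have := mulVec_mono' hM (v := fun _ => h r) hr r
  rw [mulVec_const hM1] at this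
  linarith [hc r]

lemma superharmonic_const {m : ℕ} (hm : 0 < m) {M : Matrix (Fin m) (Fin m) ℝ}
    (hM : ∀ r s, 0 ≤ M r s) (hM1 : ∀ r, ∑ s, M r s = 1) (hirr : MatIrreducible M)
    (h : Fin m → ℝ) (hh : ∀ r, M.mulVec h r ≤ h r) : ∃ c, ∀ r, h r = c := by
  have : Nonempty (Fin m) := ⟨⟨0, hm⟩⟩
  obtain ⟨r0, hr0⟩ := Finite.exists_min h
  have hpow0 : ∀ n r s, 0 ≤ (M ^ n) r s := by
    intro n
    induction n with
    | zero => intro r s; simp only [pow_zero, Matrix.one_apply]; split_ifs <;> norm_num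
    | succ n ih =>
      intro r s
      rw [pow_succ, Matrix.mul_apply]
      exact Finset.sum_nonneg fun t _ => mul_nonneg (ih _ _) (hM _ _)
  have hpow1 : ∀ n r, ∑ s, (M ^ n) r s = 1 := by
    intro n
    induction n with
    | zero => intro r; simp [Matrix.one_apply]
    | succ n ih =>
      intro r
      simp only [pow_succ, Matrix.mul_apply]
      rw [Finset.sum_comm]
      simp [← Finset.mul_sum, hM1, ih]
  have hpow : ∀ n r, (M ^ n).mulVec h r ≤ h r := by
    intro n
    induction n with
    | zero => intro r; simp
    | succ n ih =>
      intro r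
      rw [pow_succ, ← Matrix.mulVec_mulVec]
      exact (mulVec_mono' (hpow0 n) hh r).trans (ih r)
  refine ⟨h r0, fun s => ?_⟩
  obtain ⟨n, _, hn⟩ := hirr r0 s
  have h1 := hpow n r0
  have h2 : ∑ t, (M ^ n) r0 t * (h t - h r0) ≤ 0 := by
    simp only [mul_sub, Finset.sum_sub_distrib, ← Finset.sum_mul, hpow1, one_mul]
    simp only [Matrix.mulVec, dotProduct] at h1
    linarith
  have h3 := Finset.single_le_sum (f := fun t => (M ^ n) r0 t * (h t - h r0)) (s := Finset.univ)
    (fun t _ => mul_nonneg (hpow0 _ _ _) (by linarith [hr0 t])) (Finset.mem_univ s)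
  have h4 : (M ^ n) r0 s * (h s - h r0) ≤ 0 := h3.trans h2
  have := hr0 s
  nlinarith

lemma poisson {m : ℕ} (hm : 0 < m) {M : Matrix (Fin m) (Fin m) ℝ}
    (hM : ∀ r s, 0 ≤ M r s) (hM1 : ∀ r, ∑ s, M r s = 1) (hirr : MatIrreducible M) :
    ∃ σ : (Fin m → ℝ) →ₗ[ℝ] ℝ,
      (∀ d, ∃ h : Fin m → ℝ, ∀ r, d r + M.mulVec h r - h r = σ d) ∧
      (∀ d, (∀ r, 0 ≤ d r) → 0 ≤ σ d) ∧ (∀ r, 0 < σ (Pi.single r 1)) := by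
  let r0 : Fin m := ⟨0, hm⟩
  let L : (Fin m → ℝ) →ₗ[ℝ] (Fin m → ℝ) :=
    { toFun := fun h r => h r - M.mulVec h r + h r0
      map_add' := by intro x y; ext r; simp [Matrix.mulVec_add]; ring
      map_smul' := by intro c x; ext r; simp [Matrix.mulVec_smul]; ring }
  have hL : ∀ h r, L h r = h r - M.mulVec h r + h r0 := fun h r => rfl
  have hinj : Function.Injective L := by
    rw [← LinearMap.ker_eq_bot, LinearMap.ker_eq_bot']
    intro h hh
    have hr : ∀ r, h r - M.mulVec h r + h r0 = 0 := fun r => by rw [← hL, hh]; rfl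
    have h1 := max_principle hm hM hM1 h (h r0) (fun r => by linarith [hr r])
    have h2 := max_principle hm hM hM1 (-h) (-h r0) (fun r => by
      rw [Matrix.mulVec_neg]; simp only [Pi.neg_apply]; linarith [hr r])
    have h0 : h r0 = 0 := by linarith
    obtain ⟨c, hc⟩ := superharmonic_const hm hM hM1 hirr h (fun r => by linarith [hr r])
    ext r
    rw [hc r, ← hc r0, h0]; rfl
  let E := LinearEquiv.ofInjectiveEndo L hinj
  have hE : ∀ d r, d r + M.mulVec (E.symm d) r - (E.symm d) r = (E.symm d) r0 := by
    intro d r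
    have : L (E.symm d) = d := E.apply_symm_apply d
    have h2 := hL (E.symm d) r
    rw [this] at h2
    linarith
  have hnn : ∀ d, (∀ r, 0 ≤ d r) → 0 ≤ (E.symm d) r0 := by
    intro d hd
    have := max_principle hm hM hM1 (-(E.symm d)) (-(E.symm d) r0) (fun r => by
      rw [Matrix.mulVec_neg]; simp only [Pi.neg_apply]; linarith [hE d r, hd r])
    linarith
  refine ⟨(LinearMap.proj r0).comp E.symm.toLinearMap, fun d => ⟨E.symm d, hE d⟩, hnn, ?_⟩
  intro r
  have hs : ∀ t, (0:ℝ) ≤ (Pi.single r 1 : Fin m → ℝ) t := by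
    intro t; by_cases h : t = r
    · subst h; simp
    · simp [h]
  refine lt_of_le_of_ne (hnn _ hs) ?_
  intro h0
  change 0 = (E.symm (Pi.single r 1)) r0 at h0
  obtain ⟨c, hc⟩ := superharmonic_const hm hM hM1 hirr (E.symm (Pi.single r 1)) (fun t => by
    have := hE (Pi.single r 1) t
    rw [← h0] at this
    linarith [hs t])
  have h1 := hE (Pi.single r 1) r
  have h2 : E.symm (Pi.single r 1) = fun _ => c := funext hc
  rw [← h0, h2, mulVec_const hM1] at h1
  simp at h1

/-- Comparison: if `M u < u` with `u > 0`, solutions of `v = M v + e` are nonnegative. -/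
lemma resolvent_nonneg {m : ℕ} (hm : 0 < m) {M : Matrix (Fin m) (Fin m) ℝ}
    (hM : ∀ r s, 0 ≤ M r s) (u v : Fin m → ℝ) (hu : ∀ r, 0 < u r)
    (hMu : ∀ r, M.mulVec u r < u r) (hv : ∀ r, v r = M.mulVec v r + 1) (r : Fin m) : 0 ≤ v r := by
  have : Nonempty (Fin m) := ⟨⟨0, hm⟩⟩
  obtain ⟨r0, hr0⟩ := Finite.exists_min (fun r => v r / u r)
  by_contra hneg
  push Not at hneg
  set c := v r0 / u r0 with hc
  have hc0 : c < 0 := lt_of_le_of_lt (hr0 r) (div_neg_of_neg_of_pos hneg (hu r))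
  have h1 : ∀ s, (c • u) s ≤ v s := fun s => by
    have := hr0 s
    rw [le_div_iff₀ (hu s)] at this
    simpa using this
  have h2 := mulVec_mono' hM h1 r0
  rw [Matrix.mulVec_smul] at h2
  simp only [Pi.smul_apply, smul_eq_mul] at h2
  have h3 : v r0 = c * u r0 := by rw [hc]; field_simp [(hu r0).ne']
  nlinarith [hMu r0, hv r0]

lemma eig_lt_one {m : ℕ} (hm : 0 < m) {M : Matrix (Fin m) (Fin m) ℝ}
    (hM : ∀ r s, 0 ≤ M r s) (u Y : Fin m → ℝ) (hu : ∀ r, 0 < u r)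
    (hMu : ∀ r, M.mulVec u r < u r) (hY : ∀ r, 0 < Y r) (c : ℝ)
    (hc : M.mulVec Y = c • Y) : c < 1 := by
  have : Nonempty (Fin m) := ⟨⟨0, hm⟩⟩
  obtain ⟨r0, hr0⟩ := Finite.exists_max (fun r => Y r / u r)
  set k := Y r0 / u r0 with hk
  have hk0 : 0 < k := div_pos (hY r0) (hu r0)
  have h1 : ∀ s, Y s ≤ (k • u) s := fun s => by
    have := hr0 s
    rw [div_le_iff₀ (hu s)] at this
    simpa using this
  have h2 := mulVec_mono' hM h1 r0
  rw [Matrix.mulVec_smul, hc] at h2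
  simp only [Pi.smul_apply, smul_eq_mul] at h2
  have h3 : Y r0 = k * u r0 := by rw [hk]; field_simp [(hu r0).ne']
  have h4 : c * Y r0 < Y r0 := by nlinarith [hMu r0]
  by_contra h
  push Not at h
  nlinarith [hY r0]

/-- Continuation of the property spectral radius `< 1` along a path with `det (1 - M t) ≠ 0`. -/
lemma continuation {m : ℕ} (hm : 0 < m) (M : ℝ → Matrix (Fin m) (Fin m) ℝ) (a b : ℝ) (hab : a ≤ b)
    (hM : ∀ t ∈ Set.Icc a b, ∀ r s, 0 ≤ M t r s) (hcont : ContinuousOn M (Set.Icc a b))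
    (hdet : ∀ t ∈ Set.Icc a b, (1 - M t).det ≠ 0)
    (u : Fin m → ℝ) (hu : ∀ r, 0 < u r) (hMu : ∀ r, (M a).mulVec u r < u r) :
    ∃ v : Fin m → ℝ, (∀ r, 0 < v r) ∧ ∀ r, (M b).mulVec v r < v r := by
  have : Nonempty (Fin m) := ⟨⟨0, hm⟩⟩
  let v : ℝ → Fin m → ℝ := fun t => ((1 - M t).det)⁻¹ • ((1 - M t).adjugate.mulVec (fun _ => 1))
  have hv : ∀ t ∈ Set.Icc a b, ∀ r, v t r = (M t).mulVec (v t) r + 1 := by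
    intro t ht r
    have h1 : (1 - M t).mulVec (v t) = fun _ => 1 := by
      simp only [v]
      rw [Matrix.mulVec_smul, Matrix.mulVec_mulVec, Matrix.mul_adjugate, Matrix.smul_mulVec,
        Matrix.one_mulVec, smul_smul, inv_mul_cancel₀ (hdet t ht), one_smul]
    have h2 := congrFun h1 r
    rw [Matrix.sub_mulVec, Matrix.one_mulVec] at h2
    simp only [Pi.sub_apply] at h2
    linarith
  have hvc : ContinuousOn v (Set.Icc a b) := by
    have h1 : ContinuousOn (fun t => 1 - M t) (Set.Icc a b) := continuousOn_const.sub hcont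
    have h2 : ContinuousOn (fun t => (1 - M t).det) (Set.Icc a b) :=
      (Continuous.matrix_det continuous_id).comp_continuousOn h1
    have h3 : ContinuousOn (fun t => (1 - M t).adjugate.mulVec (fun _ => (1:ℝ))) (Set.Icc a b) :=
      ((Continuous.matrix_adjugate continuous_id).matrix_mulVec
        continuous_const).comp_continuousOn h1
    exact (h2.inv₀ hdet).smul h3
  have hstep : ∀ t ∈ Set.Icc a b, (∀ r, 0 ≤ v t r) → ∀ r, 1 ≤ v t r := by
    intro t ht h r
    have := mulVec_mono' (hM t ht) (u := 0) h r
    rw [Matrix.mulVec_zero] at this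
    have h2 := hv t ht r
    simp only [Pi.zero_apply] at this
    linarith
  have ha : a ∈ Set.Icc a b := ⟨le_rfl, hab⟩
  have hb : b ∈ Set.Icc a b := ⟨hab, le_rfl⟩
  let f : ℝ → ℝ := fun t => Finset.univ.inf' Finset.univ_nonempty (fun r => v t r)
  have hf : ContinuousOn f (Set.Icc a b) := by
    refine ContinuousOn.finset_inf'_apply _ ?_
    intro r _
    exact (continuous_apply r).comp_continuousOn hvc
  have hfle : ∀ t c, c ≤ f t ↔ ∀ r, c ≤ v t r := by
    intro t c; simp [f, Finset.le_inf'_iff]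
  have hfa : 1 ≤ f a := (hfle _ _).2
    (hstep a ha (resolvent_nonneg hm (hM a ha) u (v a) hu hMu (hv a ha)))
  have hfb : 0 ≤ f b := by
    by_contra hneg
    push Not at hneg
    obtain ⟨t, ht, h0⟩ := intermediate_value_Icc' hab hf (show (0:ℝ) ∈ Set.Icc (f b) (f a) from
      ⟨hneg.le, by linarith⟩)
    have h1 := (hfle t 1).2 (hstep t ht ((hfle t 0).1 h0.ge))
    linarith
  have hvb := hstep b hb ((hfle b 0).1 hfb)
  exact ⟨v b, fun r => by linarith [hvb r], fun r => by linarith [hv b hb r]⟩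

/-! ### Series lemmas -/

lemma summable_of_lt_radius {c : ℕ → ℝ} (hc : ∀ k, 0 ≤ c k) {z : ℝ} (hz : 0 ≤ z)
    (h : ENNReal.ofReal z < radius c) : Summable fun k => c k * z ^ k := by
  unfold radius at h
  simp only [lt_iSup_iff] at h
  obtain ⟨r, hr, hlt⟩ := h
  have hzr : z ≤ r := by
    have h2 : ENNReal.ofReal z ≤ ENNReal.ofReal r := by simpa using hlt.le
    exact (ENNReal.ofReal_le_ofReal_iff r.2).1 h2
  refine Summable.of_nonneg_of_le (fun k => mul_nonneg (hc k) (pow_nonneg hz k)) ?_ hr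
  intro k
  exact mul_le_mul_of_nonneg_left (pow_le_pow_left₀ hz hzr k) (hc k)

lemma summable_of_lt_phi {m : ℕ} {A : ℤ → Matrix (Fin m) (Fin m) ℝ}
    (hA0 : ∀ k r s, 0 ≤ A k r s) {z : ℝ} (hz : 0 < z)
    (h : ENNReal.ofReal z < phiA A) (r s : Fin m) :
    Summable fun k : ℕ => A (k : ℤ) r s * z ^ k := by
  have h1 : ENNReal.ofReal z < radius fun k => A ((k : ℤ) + 1) r s :=
    lt_of_lt_of_le h ((iInf_le _ r).trans (iInf_le _ s))
  have h2 := (summable_of_lt_radius (fun k => hA0 _ r s) hz.le h1).mul_right z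
  refine (summable_nat_add_iff 1).1 ?_
  refine h2.congr ?_
  intro k
  push_cast
  rw [pow_succ]; ring

lemma phase_summable {m : ℕ} {A : ℤ → Matrix (Fin m) (Fin m) ℝ} (hphase : PhaseStochastic A)
    (r s : Fin m) : Summable fun k : ℤ => A k r s :=
  (hphase r).summable.comp_injective (i := fun k : ℤ => (k, s)) (fun a b hab => by simpa using hab)

lemma phase_row {m : ℕ} {A : ℤ → Matrix (Fin m) (Fin m) ℝ} (hphase : PhaseStochastic A)
    (r : Fin m) : ∑ s, matA A r s = 1 :=
  (hasSum_prod_fin (f := fun p : ℤ × Fin m => A p.1 r p.2)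
    (fun s => (phase_summable hphase r s).hasSum)).unique (hphase r)

lemma summable_zpow {a : ℤ → ℝ} (ha : ∀ k, 0 ≤ a k) (hs : Summable a) {z : ℝ} (hz : 1 < z)
    (h : Summable fun k : ℕ => a (k : ℤ) * z ^ k) : Summable fun k : ℤ => a k * z ^ k := by
  refine Summable.of_nat_of_neg (by simpa using h) ?_
  have h1 : Summable fun k : ℕ => a (-(k : ℤ)) :=
    hs.comp_injective (i := fun k : ℕ => -(k : ℤ)) (fun a b hab => by simpa using hab)
  refine Summable.of_nonneg_of_le
    (fun k => mul_nonneg (ha _) (zpow_nonneg (by linarith) _)) ?_ h1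
  intro k
  refine mul_le_of_le_one_right (ha _) ?_
  exact zpow_le_one_of_nonpos₀ hz.le (by simp)

lemma zpow_bound {z t : ℝ} (h1 : 1 ≤ t) (hz : t ≤ z) (k : ℤ) : t ^ k ≤ 1 + z ^ k := by
  rcases le_total 0 k with hk | hk
  · have := zpow_le_zpow_left₀ hk (by linarith) hz
    linarith
  · have := zpow_le_one_of_nonpos₀ h1 hk
    have := zpow_nonneg (show 0 ≤ z by linarith) k
    linarith

lemma summable_zpow_le {a : ℤ → ℝ} (ha : ∀ k, 0 ≤ a k) (hs : Summable a) {z t : ℝ} (ht : 1 ≤ t)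
    (htz : t ≤ z) (h : Summable fun k : ℤ => a k * z ^ k) : Summable fun k : ℤ => a k * t ^ k := by
  refine Summable.of_nonneg_of_le
    (fun k => mul_nonneg (ha _) (zpow_nonneg (by linarith) _)) ?_ (hs.add h)
  intro k
  have := mul_le_mul_of_nonneg_left (zpow_bound ht htz k) (ha k)
  linarith

lemma continuousOn_series {a : ℤ → ℝ} (ha : ∀ k, 0 ≤ a k) (hs : Summable a) {z : ℝ}
    (h : Summable fun k : ℤ => a k * z ^ k) :
    ContinuousOn (fun t : ℝ => ∑' k : ℤ, a k * t ^ k) (Set.Icc 1 z) := by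
  refine continuousOn_tsum (u := fun k => a k + a k * z ^ k) ?_ (hs.add h) ?_
  · intro k
    refine continuousOn_const.mul (continuousOn_id.zpow₀ k ?_)
    intro x hx
    left
    have := hx.1
    simp only [id]; linarith
  · intro k t ht
    rw [Real.norm_eq_abs, abs_of_nonneg (mul_nonneg (ha _) (zpow_nonneg (by linarith [ht.1]) _))]
    have := mul_le_mul_of_nonneg_left (zpow_bound ht.1 ht.2 k) (ha k)
    linarith

/-- Difference quotient of `w ↦ w ^ j` at `1`. -/
noncomputable def sl (w : ℝ) (j : ℤ) : ℝ := (w ^ j - 1) / (w - 1)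

lemma sl_mono {w w' : ℝ} (h : 1 < w) (h' : w ≤ w') (j : ℤ) : sl w j ≤ sl w' j := by
  have := (convexOn_zpow (𝕜 := ℝ) j).secant_mono (a := 1) (x := w) (y := w') (by simp)
    (by simp; linarith) (by simp; linarith) h.ne' (by linarith) h'
  simpa [sl] using this

lemma sl_tendsto (j : ℤ) : Tendsto (fun w => sl w j) (𝓝[>] 1) (𝓝 (j : ℝ)) := by
  have := (hasDerivAt_iff_tendsto_slope).1 (hasDerivAt_zpow (𝕜 := ℝ) j 1 (Or.inl one_ne_zero))
  have h2 := this.mono_left (nhdsWithin_mono _ (fun x (hx : 1 < x) => (ne_of_gt hx : x ≠ 1)))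
  simp only [one_zpow, mul_one] at h2
  refine h2.congr ?_
  intro w
  simp [slope_def_field, sl]

lemma le_sl {w : ℝ} (h : 1 < w) (j : ℤ) : (j : ℝ) ≤ sl w j := by
  refine le_of_tendsto (sl_tendsto j) ?_
  filter_upwards [Ioc_mem_nhdsGT h] with t ht
  exact sl_mono ht.1 ht.2 j

lemma sl_nonneg {w : ℝ} (h : 1 < w) {j : ℤ} (hj : 0 ≤ j) : 0 ≤ sl w j :=
  le_trans (by exact_mod_cast hj) (le_sl h j)

lemma sl_nonpos {w : ℝ} (h : 1 < w) {j : ℤ} (hj : j ≤ 0) : sl w j ≤ 0 :=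
  div_nonpos_of_nonpos_of_nonneg
    (by linarith [zpow_le_one_of_nonpos₀ h.le hj]) (by linarith)

lemma summable_sl {a : ℤ → ℝ} (hs : Summable a) {z : ℝ}
    (h : Summable fun k : ℤ => a k * z ^ k) : Summable fun k : ℤ => a k * sl z k := by
  have := (h.sub hs).mul_right (z - 1)⁻¹
  refine this.congr fun k => ?_
  rw [sl, div_eq_mul_inv]; ring

/-- The dichotomy: either the phase-level drift makes `A*(w)` subcritical for some `w ∈ (1,z]`, or
the drift is finite and nonnegative. -/
lemma dichotomy {m : ℕ} (hm : 0 < m) {A : ℤ → Matrix (Fin m) (Fin m) ℝ}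
    (hA0 : ∀ k r s, 0 ≤ A k r s) (hphase : PhaseStochastic A) (hphaseirr : MatIrreducible (matA A))
    {z : ℝ} (hz1 : 1 < z) (hsz : ∀ r s, Summable fun k : ℤ => A k r s * z ^ k) :
    (∃ w, 1 < w ∧ w ≤ z ∧ ∃ u : Fin m → ℝ, (∀ r, 0 < u r) ∧
      ∀ r, (AstarR A w).mulVec u r < u r) ∨
    ((∀ r s, Summable fun k : ℤ => A k r s * (k : ℝ)) ∧ ∃ h : Fin m → ℝ,
      ∀ r, h r ≤ ∑ s, ∑' k : ℤ, A k r s * (k : ℝ) + (matA A).mulVec h r) := by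
  have hs := fun r s => phase_summable hphase r s
  have hM0 : ∀ r s, 0 ≤ matA A r s := fun r s => tsum_nonneg fun k => hA0 k r s
  have hM1 := phase_row hphase
  obtain ⟨σ, hσ, hσ0, hσ1⟩ := poisson hm hM0 hM1 hphaseirr
  have hσmono : ∀ d d' : Fin m → ℝ, (∀ r, d r ≤ d' r) → σ d ≤ σ d' := by
    intro d d' h
    have := hσ0 (d' - d) (fun r => by simpa using h r)
    rw [map_sub] at this
    linarith
  let D : ℝ → Fin m → ℝ := fun w r => ∑ s, ∑' k : ℤ, A k r s * sl w k
  have hsw : ∀ w, 1 < w → w ≤ z → ∀ r s, Summable fun k : ℤ => A k r s * w ^ k :=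
    fun w h1 h2 r s => summable_zpow_le (fun k => hA0 k r s) (hs r s) h1.le h2 (hsz r s)
  have hsl : ∀ w, 1 < w → w ≤ z → ∀ r s, Summable fun k : ℤ => A k r s * sl w k :=
    fun w h1 h2 r s => summable_sl (hs r s) (hsw w h1 h2 r s)
  have hrow : ∀ w, 1 < w → w ≤ z → ∀ r, ∑ s, AstarR A w r s = 1 + (w - 1) * D w r := by
    intro w h1 h2 r
    suffices key : ∑ s, AstarR A w r s = ∑ s, matA A r s + (w - 1) * D w r by rw [key, hM1]
    simp only [D, Finset.mul_sum]
    rw [← Finset.sum_add_distrib]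
    refine Finset.sum_congr rfl fun s _ => ?_
    rw [← tsum_mul_left]
    simp only [AstarR, matA, Matrix.of_apply]
    rw [← (hs r s).tsum_add ((hsl w h1 h2 r s).mul_left _)]
    refine tsum_congr fun k => ?_
    rw [sl]
    have : w - 1 ≠ 0 := by linarith
    field_simp
    ring
  by_cases hcase : ∃ w, 1 < w ∧ w ≤ z ∧ σ (D w) < 0
  · left
    obtain ⟨w, hw1, hwz, hneg⟩ := hcase
    obtain ⟨h, hh⟩ := hσ (D w)
    -- continuity at `1`
    have hc : ∀ r, Tendsto (fun t => (AstarR A t).mulVec h r) (𝓝[>] 1)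
        (𝓝 ((matA A).mulVec h r)) := by
      intro r
      simp only [Matrix.mulVec, dotProduct]
      refine tendsto_finsetSum _ fun s _ => ?_
      refine Tendsto.mul_const _ ?_
      have := (continuousOn_series (fun k => hA0 k r s) (hs r s) (hsz r s)) 1 ⟨le_rfl, hz1.le⟩
      have h2 : Tendsto (fun t : ℝ => ∑' k : ℤ, A k r s * t ^ k) (𝓝[>] 1) _ :=
        this.mono_left (nhdsWithin_le_of_mem (by
          filter_upwards [Ioc_mem_nhdsGT hz1] with t ht using ⟨ht.1.le, ht.2⟩))
      simpa [AstarR, matA] using h2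
    have hpos : ∀ r, Tendsto (fun t : ℝ => 1 + (t - 1) * h r) (𝓝[>] 1) (𝓝 1) := by
      intro r
      have : Continuous (fun t : ℝ => 1 + (t - 1) * h r) := by fun_prop
      have h2 := this.tendsto 1
      simp only [sub_self, zero_mul, add_zero] at h2
      exact h2.mono_left nhdsWithin_le_nhds
    have e1 : ∀ᶠ t in 𝓝[>] (1:ℝ), ∀ r, 0 < 1 + (t - 1) * h r :=
      eventually_all.2 fun r => (hpos r).eventually (lt_mem_nhds one_pos)
    have e2 : ∀ᶠ t in 𝓝[>] (1:ℝ), ∀ r, (AstarR A t).mulVec h r < (matA A).mulVec h r - σ (D w) :=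
      eventually_all.2 fun r => (hc r).eventually (gt_mem_nhds (by linarith))
    obtain ⟨t, ⟨ht1, ht2⟩, hts⟩ := ((e1.and e2).and (Ioc_mem_nhdsGT hw1)).exists
    refine ⟨t, hts.1, hts.2.trans hwz, fun r => 1 + (t - 1) * h r, ht1, fun r => ?_⟩
    have hexp : (AstarR A t).mulVec (fun r => 1 + (t - 1) * h r) r
        = ∑ s, AstarR A t r s + (t - 1) * (AstarR A t).mulVec h r := by
      simp only [Matrix.mulVec, dotProduct, Finset.mul_sum]
      rw [← Finset.sum_add_distrib]
      exact Finset.sum_congr rfl fun s _ => by ring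
    rw [hexp, hrow t hts.1 (hts.2.trans hwz) r]
    have hD : D t r ≤ D w r := Finset.sum_le_sum fun s _ =>
      (hsl t hts.1 (hts.2.trans hwz) r s).tsum_le_tsum
        (fun k => mul_le_mul_of_nonneg_left (sl_mono hts.1 hts.2 k) (hA0 k r s)) (hsl w hw1 hwz r s)
    have h3 := hh r
    have h4 := ht2 r
    have h5 : D t r + (AstarR A t).mulVec h r < h r := by linarith
    have h6 : 0 < t - 1 := by linarith [hts.1]
    nlinarith
  · right
    push Not at hcase
    -- positive part
    let p : Fin m → ℝ := fun r => ∑ s, ∑' k : ℤ, A k r s * max (sl z k) 0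
    have hps : ∀ w, 1 < w → w ≤ z → ∀ r s, Summable fun k : ℤ => A k r s * max (sl w k) 0 := by
      intro w h1 h2 r s
      refine Summable.of_nonneg_of_le (fun k => mul_nonneg (hA0 _ _ _) (le_max_right _ _)) ?_
        (hsl w h1 h2 r s).abs
      intro k
      rw [abs_mul, abs_of_nonneg (hA0 k r s)]
      exact mul_le_mul_of_nonneg_left (max_le (le_abs_self _) (abs_nonneg _)) (hA0 _ _ _)
    have hns : ∀ w, 1 < w → w ≤ z → ∀ r s, Summable fun k : ℤ => A k r s * max (-sl w k) 0 := by
      intro w h1 h2 r s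
      refine Summable.of_nonneg_of_le (fun k => mul_nonneg (hA0 _ _ _) (le_max_right _ _)) ?_
        (hsl w h1 h2 r s).abs
      intro k
      rw [abs_mul, abs_of_nonneg (hA0 k r s)]
      exact mul_le_mul_of_nonneg_left (max_le (neg_le_abs _) (abs_nonneg _)) (hA0 _ _ _)
    have hbound : ∀ w, 1 < w → w ≤ z → ∀ r s,
        ∑' k : ℤ, A k r s * max (-sl w k) 0 ≤ σ p / σ (Pi.single r 1) := by
      intro w h1 h2 r s
      rw [le_div_iff₀ (hσ1 r), ← smul_eq_mul, ← map_smul]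
      have hD0 := hcase w h1 h2
      refine le_trans (b := σ (p - D w)) (hσmono _ _ fun t => ?_) (by rw [map_sub]; linarith)
      have hD : ∀ t, ∑ s, ∑' k : ℤ, A k t s * max (-sl w k) 0 ≤ p t - D w t := by
        intro t
        simp only [p, D]
        rw [← Finset.sum_sub_distrib]
        refine Finset.sum_le_sum fun s _ => ?_
        rw [← (hps z hz1 le_rfl t s).tsum_sub (hsl w h1 h2 t s)]
        refine (hns w h1 h2 t s).tsum_le_tsum ?_
          ((hps z hz1 le_rfl t s).sub (hsl w h1 h2 t s))
        intro k
        rw [← mul_sub]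
        refine mul_le_mul_of_nonneg_left ?_ (hA0 _ _ _)
        have h3 := sl_mono h1 h2 k
        refine max_le ?_ ?_
        · linarith [le_max_right (sl z k) 0]
        · linarith [le_max_left (sl z k) 0]
      have hnn : ∀ t s, 0 ≤ ∑' k : ℤ, A k t s * max (-sl w k) 0 := fun t s =>
        tsum_nonneg fun k => mul_nonneg (hA0 _ _ _) (le_max_right _ _)
      by_cases hrt : t = r
      · subst hrt
        have := Finset.single_le_sum (fun s _ => hnn t s) (Finset.mem_univ s)
        simpa using this.trans (hD t)
      · have := (Finset.sum_nonneg fun s (_ : s ∈ Finset.univ) => hnn t s).trans (hD t)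
        simpa [hrt] using this
    have hneg : ∀ r s, Summable fun k : ℤ => A k r s * max (-(k:ℝ)) 0 := by
      intro r s
      refine summable_of_sum_le (c := σ p / σ (Pi.single r 1))
        (fun k => mul_nonneg (hA0 _ _ _) (le_max_right _ _)) ?_
      intro F
      have hlim : Tendsto (fun w => ∑ k ∈ F, A k r s * max (-sl w k) 0) (𝓝[>] 1)
          (𝓝 (∑ k ∈ F, A k r s * max (-(k:ℝ)) 0)) := by
        refine tendsto_finsetSum _ fun k _ => ?_
        exact ((sl_tendsto k).neg.max tendsto_const_nhds).const_mul _
      refine le_of_tendsto hlim ?_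
      filter_upwards [Ioc_mem_nhdsGT hz1] with w hw
      exact ((hns w hw.1 hw.2 r s).sum_le_tsum F
        (fun k _ => mul_nonneg (hA0 _ _ _) (le_max_right _ _))).trans (hbound w hw.1 hw.2 r s)
    have hbd : ∀ r s, Summable fun k : ℤ => A k r s * max (sl z k) 0 + A k r s * max (-(k:ℝ)) 0 :=
      fun r s => (hps z hz1 le_rfl r s).add (hneg r s)
    have hsk : ∀ r s, Summable fun k : ℤ => A k r s * (k:ℝ) := by
      intro r s
      refine Summable.of_norm_bounded (hbd r s) ?_
      intro k
      rw [Real.norm_eq_abs, abs_mul, abs_of_nonneg (hA0 k r s), ← mul_add]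
      refine mul_le_mul_of_nonneg_left ?_ (hA0 _ _ _)
      have := le_sl hz1 k
      refine abs_le.2 ⟨?_, ?_⟩
      · linarith [le_max_left (-(k:ℝ)) 0, le_max_right (sl z k) 0]
      · linarith [le_max_right (-(k:ℝ)) 0, le_max_left (sl z k) 0]
    refine ⟨hsk, ?_⟩
    let d : Fin m → ℝ := fun r => ∑ s, ∑' k : ℤ, A k r s * (k : ℝ)
    have hDd : Tendsto D (𝓝[>] 1) (𝓝 d) := by
      refine tendsto_pi_nhds.2 fun r => ?_
      refine tendsto_finsetSum _ fun s _ => ?_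
      refine tendsto_tsum_of_dominated_convergence (hbd r s)
        (fun k => (sl_tendsto k).const_mul _) ?_
      filter_upwards [Ioc_mem_nhdsGT hz1] with w hw
      intro k
      rw [Real.norm_eq_abs, abs_mul, abs_of_nonneg (hA0 k r s), ← mul_add]
      refine mul_le_mul_of_nonneg_left ?_ (hA0 _ _ _)
      have h1 := le_sl hw.1 k
      have h2 := sl_mono hw.1 hw.2 k
      refine abs_le.2 ⟨?_, ?_⟩
      · linarith [le_max_left (-(k:ℝ)) 0, le_max_right (sl z k) 0]
      · linarith [le_max_right (-(k:ℝ)) 0, le_max_left (sl z k) 0]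
    have hσd : 0 ≤ σ d := by
      refine ge_of_tendsto ((LinearMap.continuous_of_finiteDimensional σ).continuousAt.tendsto.comp
        hDd) ?_
      filter_upwards [Ioc_mem_nhdsGT hz1] with w hw
      exact hcase w hw.1 hw.2
    obtain ⟨h, hh⟩ := hσ d
    refine ⟨h, fun r => ?_⟩
    have := hh r
    simp only [d] at this hσd
    linarith

/-! ### The kernel -/

lemma P_zero {m : ℕ} (A B : ℤ → Matrix (Fin m) (Fin m) ℝ) (r s : Fin m) (k : ℕ) :
    P A B (0, r) (k, s) = B (k : ℤ) r s := by cases k <;> rfl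

lemma P_succ_zero {m : ℕ} (A B : ℤ → Matrix (Fin m) (Fin m) ℝ) (i : ℕ) (r s : Fin m) :
    P A B (i + 1, r) (0, s) = B (-(i + 1 : ℤ)) r s := rfl

lemma P_succ_succ {m : ℕ} (A B : ℤ → Matrix (Fin m) (Fin m) ℝ) (i k : ℕ) (r s : Fin m) :
    P A B (i + 1, r) (k + 1, s) = A ((k : ℤ) - (i : ℤ)) r s := rfl

lemma shift_inj (i : ℕ) : Function.Injective (fun k : ℕ => (k : ℤ) - (i : ℤ)) :=
  fun a b hab => by simpa using hab

/-- Sum of the kernel against a function vanishing at level `0`, in terms of the increments. -/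
lemma hasSum_level {m : ℕ} {A B : ℤ → Matrix (Fin m) (Fin m) ℝ} (i : ℕ) (r : Fin m)
    (F : S m → ℝ) (f : ℤ → Fin m → ℝ) (hF0 : ∀ s, F (0, s) = 0)
    (hF : ∀ (k : ℕ) s, F (k + 1, s) = f ((k : ℤ) - (i : ℤ)) s)
    (hf : ∀ (j : ℤ) s, j < -(i : ℤ) → f j s = 0)
    (hs : ∀ s, Summable fun j : ℤ => A j r s * f j s) :
    HasSum (fun y => P A B (i + 1, r) y * F y) (∑ s, ∑' j : ℤ, A j r s * f j s) := by
  refine hasSum_prod_fin fun s => ?_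
  rw [← hasSum_nat_add_iff' 1]
  simp only [Finset.sum_range_one, hF0, mul_zero, sub_zero]
  have := ((shift_inj i).hasSum_iff (f := fun j : ℤ => A j r s * f j s) (by
    intro j hj
    rw [hf j s, mul_zero]
    by_contra hcon
    push Not at hcon
    exact hj ⟨(j + i).toNat, by simp only; omega⟩)).2 (hs s).hasSum
  refine this.congr_fun ?_ |> fun h => h
  intro k
  simp only [P_succ_succ, hF, Function.comp]

lemma no_nonneg_drift {m : ℕ} (hm : 0 < m) {A B : ℤ → Matrix (Fin m) (Fin m) ℝ}
    (hA0 : ∀ k r s, 0 ≤ A k r s) (hB0 : ∀ k r s, 0 ≤ B k r s) (hP : Stochastic (P A B))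
    (hirr : ChainIrreducible (P A B)) (hphase : PhaseStochastic A)
    {pd : S m → ℝ} (hpd : IsStationary (P A B) pd)
    {z : ℝ} (hz1 : 1 < z) (hB : ∀ r s, Summable fun k : ℕ => B (k : ℤ) r s * z ^ k)
    (hsk : ∀ r s, Summable fun k : ℤ => A k r s * (k : ℝ))
    (h : Fin m → ℝ)
    (hh : ∀ r, h r ≤ ∑ s, ∑' k : ℤ, A k r s * (k : ℝ) + (matA A).mulVec h r)
    (hle : ∀ r, h r ≤ 0) : False := by
  have hs := fun r s => phase_summable hphase r s
  have hM1 := phase_row hphase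
  obtain ⟨K, hK⟩ : ∃ K : ℝ, ∀ r, -h r ≤ K := by
    obtain ⟨K, hK⟩ := (Set.finite_range (fun r => -h r)).bddAbove
    exact ⟨K, fun r => hK ⟨r, rfl⟩⟩
  have hK0 : 0 ≤ K := by linarith [hK ⟨0, hm⟩, hle ⟨0, hm⟩]
  let G : S m → ℝ := fun x => max ((x.1 : ℝ) + h x.2) 0
  have hG0 : ∀ x, 0 ≤ G x := fun x => le_max_right _ _
  have hGz : ∀ s, G (0, s) = 0 := fun s => by simp [G, hle s]
  have hGle : ∀ k s, G (k, s) ≤ k := fun k s =>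
    max_le (by simpa using hle s) (Nat.cast_nonneg k)
  have hsabs : ∀ r s, Summable fun k : ℤ => A k r s * |(k : ℝ)| := by
    intro r s
    refine (hsk r s).abs.congr fun k => ?_
    rw [abs_mul, abs_of_nonneg (hA0 k r s)]
  have hsc : ∀ r s (c : ℝ), Summable fun k : ℤ => A k r s * (|(k : ℝ)| + c) := by
    intro r s c
    refine ((hsabs r s).add ((hs r s).mul_right c)).congr fun k => ?_
    ring
  -- level zero
  have hz0 : ∀ r, Summable fun y => P A B (0, r) y * G y := by
    intro r
    refine summable_prod_fin fun s => ?_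
    refine Summable.of_nonneg_of_le (fun k => mul_nonneg (hP.1 _ _) (hG0 _)) ?_
      ((hB r s).mul_right (z - 1)⁻¹)
    intro k
    rw [P_zero, mul_assoc]
    refine mul_le_mul_of_nonneg_left ((hGle k s).trans ?_) (hB0 _ _ _)
    have h1 := le_sl hz1 (k : ℤ)
    simp only [sl, zpow_natCast, Int.cast_natCast] at h1
    refine h1.trans ?_
    rw [div_eq_mul_inv]
    exact mul_le_mul_of_nonneg_right (by linarith) (inv_nonneg.2 (by linarith))
  -- positive levels
  have hlev : ∀ (i : ℕ) r, HasSum (fun y => P A B (i + 1, r) y * G y)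
      (∑ s, ∑' j : ℤ, A j r s * max ((i : ℝ) + 1 + j + h s) 0) := by
    intro i r
    refine hasSum_level i r G (fun j s => max ((i : ℝ) + 1 + j + h s) 0) hGz ?_ ?_ ?_
    · intro k s
      simp only [G]
      push_cast
      congr 1
      ring
    · intro j s hj
      refine max_eq_right ?_
      have : (j : ℝ) ≤ -i - 1 := by
        have : j ≤ -(i : ℤ) - 1 := by omega
        exact_mod_cast this
      linarith [hle s]
    · intro s
      refine Summable.of_nonneg_of_le (fun k => mul_nonneg (hA0 _ _ _) (le_max_right _ _)) ?_
        (hsc r s (i + 1))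
      intro j
      refine mul_le_mul_of_nonneg_left ?_ (hA0 _ _ _)
      have hi : (0:ℝ) ≤ i := Nat.cast_nonneg i
      exact max_le (by linarith [hle s, le_abs_self (j : ℝ)]) (by positivity)
  have hGs : ∀ x, Summable fun y => P A B x y * G y := by
    rintro ⟨_ | i, r⟩
    · exact hz0 r
    · exact (hlev i r).summable
  have hsub : ∀ x, G x ≤ ∑' y, P A B x y * G y := by
    rintro ⟨_ | i, r⟩
    · rw [hGz]
      exact tsum_nonneg fun y => mul_nonneg (hP.1 _ _) (hG0 _)
    · refine max_le ?_ (tsum_nonneg fun y => mul_nonneg (hP.1 _ _) (hG0 _))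
      rw [(hlev i r).tsum_eq]
      have h1 : ∀ s, HasSum (fun j : ℤ => A j r s * ((i : ℝ) + 1 + j + h s))
          (matA A r s * (i + 1) + ∑' j : ℤ, A j r s * (j : ℝ) + matA A r s * h s) := by
        intro s
        have := (((hs r s).hasSum.mul_right ((i : ℝ) + 1)).add (hsk r s).hasSum).add
          ((hs r s).hasSum.mul_right (h s))
        refine this.congr_fun ?_ |> fun h => h
        intro j; ring
      have h2 : ∑ s, (matA A r s * ((i : ℝ) + 1) + ∑' j : ℤ, A j r s * (j : ℝ) + matA A r s * h s)
          ≤ ∑ s, ∑' j : ℤ, A j r s * max ((i : ℝ) + 1 + j + h s) 0 := by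
        refine Finset.sum_le_sum fun s _ => ?_
        rw [← (h1 s).tsum_eq]
        refine (h1 s).summable.tsum_le_tsum
          (fun j => mul_le_mul_of_nonneg_left (le_max_left _ _) (hA0 _ _ _)) ?_
        refine Summable.of_nonneg_of_le (fun k => mul_nonneg (hA0 _ _ _) (le_max_right _ _)) ?_
          (hsc r s (i + 1))
        intro j
        refine mul_le_mul_of_nonneg_left ?_ (hA0 _ _ _)
        have hi : (0:ℝ) ≤ i := Nat.cast_nonneg i
        exact max_le (by linarith [hle s, le_abs_self (j : ℝ)]) (by positivity)
      rw [Finset.sum_add_distrib, Finset.sum_add_distrib, ← Finset.sum_mul, hM1] at h2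
      have h3 := hh r
      simp only [Matrix.mulVec, dotProduct] at h3
      push_cast
      linarith
  -- positive increments
  have hinc : ∀ (i : ℕ) r, ∑' y, P A B (i + 1, r) y * max (G y - G (i + 1, r)) 0
      ≤ ∑ s, ∑' j : ℤ, A j r s * (|(j : ℝ)| + K) := by
    intro i r
    have hptw : ∀ (j : ℤ) s,
        max (max ((i : ℝ) + 1 + j + h s) 0 - G (i + 1, r)) 0 ≤ |(j : ℝ)| + K := by
      intro j s
      have hj := abs_nonneg (j : ℝ)
      refine max_le ?_ (by linarith)
      have h1 : (i : ℝ) + 1 + h r ≤ G (i + 1, r) := by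
        have := le_max_left (((i + 1 : ℕ) : ℝ) + h r) 0
        push_cast at this
        simpa [G] using this
      have : max ((i : ℝ) + 1 + j + h s) 0 ≤ |(j : ℝ)| + K + G (i + 1, r) := by
        refine max_le ?_ (by linarith [hG0 (i + 1, r)])
        linarith [le_abs_self (j : ℝ), hle s, hK r]
      linarith
    have hsum : ∀ s, Summable fun j : ℤ =>
        A j r s * max (max ((i : ℝ) + 1 + j + h s) 0 - G (i + 1, r)) 0 := fun s =>
      Summable.of_nonneg_of_le (fun k => mul_nonneg (hA0 _ _ _) (le_max_right _ _))
        (fun j => mul_le_mul_of_nonneg_left (hptw j s) (hA0 _ _ _)) (hsc r s K)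
    have := hasSum_level (A := A) (B := B) i r (fun y => max (G y - G (i + 1, r)) 0)
      (fun j s => max (max ((i : ℝ) + 1 + j + h s) 0 - G (i + 1, r)) 0)
      (fun s => by simp only [hGz]; exact max_eq_right (by linarith [hG0 (i + 1, r)])) ?_ ?_ hsum
    · rw [this.tsum_eq]
      refine Finset.sum_le_sum fun s _ => ?_
      exact (hsum s).tsum_le_tsum
        (fun j => mul_le_mul_of_nonneg_left (hptw j s) (hA0 _ _ _)) (hsc r s K)
    · intro k s
      have : G (k + 1, s) = max ((i : ℝ) + 1 + (((k : ℤ) - (i : ℤ) : ℤ) : ℝ) + h s) 0 := by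
        simp only [G]
        push_cast
        congr 1
        ring
      rw [this]
    · intro j s hj
      have : (j : ℝ) ≤ -i - 1 := by
        have : j ≤ -(i : ℤ) - 1 := by omega
        exact_mod_cast this
      have h2 : max ((i : ℝ) + 1 + j + h s) 0 = 0 := max_eq_right (by linarith [hle s])
      rw [h2]
      exact max_eq_right (by linarith [hG0 (i + 1, r)])
  obtain ⟨K1, hK1⟩ : ∃ K1 : ℝ, ∀ r, ∑' y, P A B (0, r) y * G y ≤ K1 := by
    obtain ⟨K, hK⟩ := (Set.finite_range (fun r => ∑' y, P A B (0, r) y * G y)).bddAbove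
    exact ⟨K, fun r => hK ⟨r, rfl⟩⟩
  obtain ⟨K2, hK2⟩ : ∃ K2 : ℝ, ∀ r, ∑ s, ∑' j : ℤ, A j r s * (|(j : ℝ)| + K) ≤ K2 := by
    obtain ⟨K', hK'⟩ :=
      (Set.finite_range (fun r => ∑ s, ∑' j : ℤ, A j r s * (|(j : ℝ)| + K))).bddAbove
    exact ⟨K', fun r => hK' ⟨r, rfl⟩⟩
  have hKK : ∀ x, ∑' y, P A B x y * max (G y - G x) 0 ≤ max K1 K2 := by
    rintro ⟨_ | i, r⟩
    · refine le_trans (le_of_eq (tsum_congr fun y => ?_)) ((hK1 r).trans (le_max_left _ _))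
      rw [hGz, sub_zero, max_eq_left (hG0 y)]
    · exact (hinc i r).trans ((hK2 r).trans (le_max_right _ _))
  obtain ⟨n, hn⟩ := exists_nat_gt K
  have := subharmonic_const hP hirr hpd G hG0 hGs hsub _ hKK (0, ⟨0, hm⟩) (hGz _) (n, ⟨0, hm⟩)
  have h2 : (n : ℝ) + h ⟨0, hm⟩ ≤ G (n, ⟨0, hm⟩) := le_max_left _ _
  linarith [hK ⟨0, hm⟩]

lemma AstarC_det {m : ℕ} (A : ℤ → Matrix (Fin m) (Fin m) ℝ) (t : ℝ) :
    (1 - AstarC A (t : ℂ)).det = (((1 - AstarR A t).det : ℝ) : ℂ) := by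
  have h1 : (1 - AstarC A (t : ℂ)) = (Complex.ofRealHom).mapMatrix (1 - AstarR A t) := by
    rw [map_sub, map_one]
    congr 1
    ext r s
    simp [AstarC, AstarR, Complex.ofReal_tsum]
  rw [h1, ← RingHom.map_det]
  rfl

/-- Geometric drift condition for `V(i,r) = zⁱ y_r`: for an irreducible,
aperiodic, positive recurrent `GI/G/1`-type chain with stochastic phase matrix and
`min(φ_{A+}, φ_{B+}) > 1`, for any `1 < z < min(φ_{A+}, φ_{B+}, η)` and the corresponding
Perron–Frobenius eigenvector `Y ≥ e` of `A*(z)`, the function `V ≥ 1` and there are a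
nonempty finite set `H` and `λ < 1` with `PV ≤ λ V` off `H` and `PV < ∞` on `H`. -/
theorem geometric_drift {m : ℕ} (hm : 0 < m)
    (A B : ℤ → Matrix (Fin m) (Fin m) ℝ)
    (hA0 : ∀ k r s, 0 ≤ A k r s) (hB0 : ∀ k r s, 0 ≤ B k r s)
    (hP : Stochastic (P A B))
    (hirr : ChainIrreducible (P A B)) (hap : ChainAperiodic (P A B))
    (hphase : PhaseStochastic A) (hphaseirr : MatIrreducible (matA A))
    (pd : S m → ℝ) (hpd : IsStationary (P A B) pd)
    (hphi : 1 < min (phiA A) (phiB B))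
    (z : ℝ) (hz1 : 1 < z)
    (hz2 : ENNReal.ofReal z < min (phiA A) (min (phiB B) (eta A)))
    (Y : Fin m → ℝ) (hY1 : ∀ r, 1 ≤ Y r)
    (hYeig : (AstarR A z).mulVec Y = chi (AstarR A z) • Y) :
    (∀ x : S m, 1 ≤ z ^ x.1 * Y x.2) ∧
      ∃ H : Finset (S m), H.Nonempty ∧
        ∃ lam : ℝ, lam < 1 ∧
          (∀ x : S m, x ∉ H →
            Summable (fun y : S m => P A B x y * (z ^ y.1 * Y y.2)) ∧
              (∑' y : S m, P A B x y * (z ^ y.1 * Y y.2)) ≤ lam * (z ^ x.1 * Y x.2)) ∧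
          (∀ x : S m, x ∈ H → Summable fun y : S m => P A B x y * (z ^ y.1 * Y y.2)) := by
  have hz0 : 0 < z := by linarith
  have hzA : ENNReal.ofReal z < phiA A := lt_of_lt_of_le hz2 (min_le_left _ _)
  have hzB : ENNReal.ofReal z < phiB B :=
    lt_of_lt_of_le hz2 ((min_le_right _ _).trans (min_le_left _ _))
  have hzE : ENNReal.ofReal z < eta A :=
    lt_of_lt_of_le hz2 ((min_le_right _ _).trans (min_le_right _ _))
  have hs := fun r s => phase_summable hphase r s
  have hsz : ∀ r s, Summable fun k : ℤ => A k r s * z ^ k := fun r s =>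
    summable_zpow (fun k => hA0 k r s) (hs r s) hz1 (summable_of_lt_phi hA0 hz0 hzA r s)
  have hBz : ∀ r s, Summable fun k : ℕ => B (k : ℤ) r s * z ^ k :=
    summable_of_lt_phi (A := B) hB0 hz0 hzB
  have hstar0 : ∀ t, 0 ≤ t → ∀ r s, 0 ≤ AstarR A t r s := fun t ht r s =>
    tsum_nonneg fun k => mul_nonneg (hA0 _ _ _) (zpow_nonneg ht _)
  have hY0 : ∀ r, 0 < Y r := fun r => by linarith [hY1 r]
  have hchi : chi (AstarR A z) < 1 := by
    rcases dichotomy hm hA0 hphase hphaseirr hz1 hsz with ⟨w, hw1, hwz, u, hu, hMu⟩ | ⟨hsk, h, hh⟩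
    · have hcontA : ContinuousOn (AstarR A) (Set.Icc w z) := by
        refine continuousOn_pi.2 fun r => continuousOn_pi.2 fun s => ?_
        exact (continuousOn_series (fun k => hA0 k r s) (hs r s) (hsz r s)).mono
          (Set.Icc_subset_Icc_left hw1.le)
      have hdetA : ∀ t ∈ Set.Icc w z, (1 - AstarR A t).det ≠ 0 := by
        intro t ht hdet
        have ht1 : 1 < t := lt_of_lt_of_le hw1 ht.1
        have hnorm : ‖(t : ℂ)‖ = t := by
          rw [Complex.norm_real, Real.norm_eq_abs, abs_of_pos (by linarith)]
        have hle : ENNReal.ofReal t ≤ ENNReal.ofReal z := ENNReal.ofReal_le_ofReal ht.2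
        have hmem : (t : ℂ) ∈ Omega A := by
          refine ⟨by rw [hnorm]; exact ht1, by rw [hnorm]; exact lt_of_le_of_lt hle hzA, ?_⟩
          rw [AstarC_det, hdet]; rfl
        have h1 : eta A ≤ ENNReal.ofReal t := by
          have := sInf_le (Set.mem_image_of_mem (fun z : ℂ => ENNReal.ofReal ‖z‖) hmem)
          simp only [hnorm] at this
          exact this
        exact absurd (lt_of_lt_of_le hzE h1) (not_lt.2 hle)
      obtain ⟨v, hv, hMv⟩ := continuation hm (AstarR A) w z hwz
        (fun t ht => hstar0 t (by linarith [ht.1])) hcontA hdetA u hu hMu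
      exact eig_lt_one hm (hstar0 z hz0.le) v Y hv hMv hY0 _ hYeig
    · exfalso
      obtain ⟨c, hc⟩ := (Set.finite_range h).bddAbove
      refine no_nonneg_drift hm hA0 hB0 hP hirr hphase hpd hz1 hBz hsk (fun r => h r - c) ?_ ?_
      · intro r
        have e : (matA A).mulVec (fun r => h r - c) r = (matA A).mulVec h r - c := by
          have h1 : (fun r => h r - c) = h - fun _ => c := rfl
          rw [h1, Matrix.mulVec_sub, Pi.sub_apply, mulVec_const (phase_row hphase)]
        rw [e]
        linarith [hh r]
      · intro r
        have := hc ⟨r, rfl⟩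
        simpa using this
  have hV : ∀ x : S m, 1 ≤ z ^ x.1 * Y x.2 := fun x =>
    one_le_mul_of_one_le_of_one_le (one_le_pow₀ hz1.le) (hY1 _)
  refine ⟨hV, ?_⟩
  -- transitions from level zero
  have hsum0 : ∀ r, Summable (fun y : S m => P A B (0, r) y * (z ^ y.1 * Y y.2)) := by
    intro r
    refine summable_prod_fin fun s => ?_
    refine ((hBz r s).mul_right (Y s)).congr fun k => ?_
    rw [P_zero]; ring
  obtain ⟨C, hC⟩ : ∃ C : ℝ, ∀ r, Y r ≤ C := by
    obtain ⟨C, hC⟩ := (Set.finite_range Y).bddAbove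
    exact ⟨C, fun r => hC ⟨r, rfl⟩⟩
  have hC0 : 0 < C := lt_of_lt_of_le (hY0 ⟨0, hm⟩) (hC _)
  have hBle : ∀ (i : ℕ) r s, B (-(i + 1 : ℤ)) r s ≤ 1 := by
    intro i r s
    exact le_hasSum (hP.2 (i + 1, r)) (0, s) (fun y _ => hP.1 _ y)
  -- transitions from positive levels
  have hlev : ∀ (i : ℕ) r, Summable (fun y : S m => P A B (i + 1, r) y * (z ^ y.1 * Y y.2)) ∧
      (∑' y : S m, P A B (i + 1, r) y * (z ^ y.1 * Y y.2)) ≤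
        m * C + chi (AstarR A z) * (z ^ (i + 1) * Y r) := by
    intro i r
    have h1 : ∀ s, HasSum (fun k : ℕ => P A B (i + 1, r) (k, s) * (z ^ k * Y s))
        (B (-(i + 1 : ℤ)) r s * Y s +
          (∑' k : ℕ, A ((k : ℤ) - (i : ℤ)) r s * z ^ ((k : ℤ) - (i : ℤ))) *
            (z ^ (i + 1) * Y s)) := by
      intro s
      rw [← hasSum_nat_add_iff' 1]
      simp only [Finset.sum_range_one, P_succ_zero, pow_zero, one_mul, add_sub_cancel_left]
      have := (((hsz r s).comp_injective (shift_inj i)).hasSum).mul_right (z ^ (i + 1) * Y s)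
      refine this.congr_fun ?_ |> fun h => h
      intro k
      simp only [Function.comp, P_succ_succ]
      have e : z ^ (k + 1) = z ^ ((k : ℤ) - (i : ℤ)) * z ^ (i + 1) := by
        rw [← zpow_natCast, ← zpow_natCast, ← zpow_add₀ hz0.ne']
        congr 1
        push_cast
        ring
      rw [e]; ring
    have h2 := hasSum_prod_fin
      (f := fun y : S m => P A B (i + 1, r) y * (z ^ y.1 * Y y.2)) h1
    refine ⟨h2.summable, ?_⟩
    rw [h2.tsum_eq, Finset.sum_add_distrib]
    refine add_le_add ?_ ?_
    · calc ∑ s, B (-(i + 1 : ℤ)) r s * Y s ≤ ∑ s : Fin m, C := Finset.sum_le_sum fun s _ => by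
            have := mul_le_of_le_one_left (hY0 s).le (hBle i r s)
            linarith [hC s]
        _ = m * C := by simp
    · have h3 := congrFun hYeig r
      simp only [Matrix.mulVec, dotProduct, Pi.smul_apply, smul_eq_mul] at h3
      have h4 : chi (AstarR A z) * (z ^ (i + 1) * Y r)
          = ∑ s, AstarR A z r s * (z ^ (i + 1) * Y s) := by
        rw [mul_left_comm, ← h3, Finset.mul_sum]
        exact Finset.sum_congr rfl fun s _ => by ring
      rw [h4]
      refine Finset.sum_le_sum fun s _ => ?_
      refine mul_le_mul_of_nonneg_right ?_ (mul_nonneg (pow_nonneg hz0.le _) (hY0 s).le)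
      exact tsum_comp_le_tsum_of_inj (hsz r s)
        (fun k => mul_nonneg (hA0 _ _ _) (zpow_nonneg hz0.le _)) (shift_inj i)
  have hall : ∀ x : S m, Summable fun y : S m => P A B x y * (z ^ y.1 * Y y.2) := by
    rintro ⟨_ | i, r⟩
    · exact hsum0 r
    · exact (hlev i r).1
  set χ := chi (AstarR A z) with hχ
  obtain ⟨N, hN⟩ := pow_unbounded_of_one_lt (m * C / ((1 - χ) / 2)) hz1
  have hgap : 0 < (1 - χ) / 2 := by linarith
  rw [div_lt_iff₀ hgap] at hN
  refine ⟨(Finset.range (N + 1)) ×ˢ Finset.univ, ⟨(0, ⟨0, hm⟩), by simp⟩, (1 + χ) / 2,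
    by linarith, ?_, fun x _ => hall x⟩
  rintro ⟨i, r⟩ hx
  refine ⟨hall _, ?_⟩
  simp only [Finset.mem_product, Finset.mem_range, Finset.mem_univ, and_true, not_lt] at hx
  obtain ⟨i, rfl⟩ : ∃ k, i = k + 1 := ⟨i - 1, by omega⟩
  refine (hlev i r).2.trans ?_
  have h1 : z ^ N ≤ z ^ (i + 1) * Y r := by
    have h2 : z ^ N ≤ z ^ (i + 1) := pow_le_pow_right₀ hz1.le (by omega)
    have h3 : z ^ (i + 1) ≤ z ^ (i + 1) * Y r :=
      le_mul_of_one_le_right (pow_nonneg hz0.le _) (hY1 r)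
    linarith
  have h4 : z ^ N * ((1 - χ) / 2) ≤ z ^ (i + 1) * Y r * ((1 - χ) / 2) :=
    mul_le_mul_of_nonneg_right h1 hgap.le
  simp only
  linarith

end GIG1
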